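/- Let E be a real normed space, Γ a set, and Φ : E → c₀(Γ) a map. Suppose for every finite set A ⊆ Γ there is a separable subspace Z_A of E such that (a) Z_A ⊆ Z_B whenever A ⊆ B are finite subsets of Γ, and (b) x belongs to the norm-closure of the linear span of ∪_{n∈ℕ} Z_{K_n} whenever x ∈ E and {K_n : n ∈ ℕ} is an increasing sequence of finite subsets of Γ whose union contains supp(Φx) = {γ ∈ Γ : Φx(γ) ≠ 0}. Then for every x ∈ E there exists a separable subspace Z(x) of E such that whenever {x_n : n ∈ ℕ} is a sequence in E with lim_n ‖Φx_n − Φx‖_∞ = 0, one has x in the norm-closure of the linear span of ∪_{n∈ℕ} Z(x_n). -/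

import Mathlib

open Set Metric Topology Filter

theorem c0_bdd {Γ : Type*} (f : Γ → ℝ) (hf : {γ : Γ | (1:ℝ) ≤ |f γ|}.Finite) :
    ∃ C : ℝ, ∀ γ, |f γ| ≤ C := by
  obtain ⟨C, hC⟩ := (hf.image (fun γ => |f γ|)).bddAbove
  refine ⟨max C 1, fun γ => ?_⟩
  by_cases h : (1:ℝ) ≤ |f γ|
  · exact le_max_of_le_left (hC ⟨γ, h, rfl⟩)
  · exact le_max_of_le_right (not_le.mp h).le

/-- condition (i) implies condition (iii). -/
theorem exists_separable_subspace_assignment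
    {E : Type*} [NormedAddCommGroup E] [NormedSpace ℝ E] {Γ : Type*}
    (Φ : E → Γ → ℝ)
    -- `Φ` takes values in `c₀(Γ)`
    (hc0 : ∀ x : E, ∀ ε : ℝ, 0 < ε → {γ : Γ | ε ≤ |Φ x γ|}.Finite)
    (Z : Finset Γ → Submodule ℝ E)
    (hZsep : ∀ A : Finset Γ, TopologicalSpace.IsSeparable (Z A : Set E))
    -- (a)
    (ha : ∀ A B : Finset Γ, A ⊆ B → Z A ≤ Z B)
    -- (b)
    (hb : ∀ (x : E) (K : ℕ → Finset Γ), Monotone K →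
      {γ : Γ | Φ x γ ≠ 0} ⊆ ⋃ n : ℕ, (K n : Set Γ) →
      x ∈ closure (Submodule.span ℝ (⋃ n : ℕ, (Z (K n) : Set E)) : Set E)) :
    ∃ W : E → Submodule ℝ E,
      (∀ x : E, TopologicalSpace.IsSeparable (W x : Set E)) ∧
      ∀ (x : E) (xs : ℕ → E),
        Tendsto (fun n => ⨆ γ : Γ, |Φ (xs n) γ - Φ x γ|) atTop (𝓝 0) →
        x ∈ closure (Submodule.span ℝ (⋃ n : ℕ, (W (xs n) : Set E)) : Set E) := by
  have hpos : ∀ n : ℕ, (0:ℝ) < 1 / ((n:ℝ) + 1) := fun n => by positivity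
  let K : E → ℕ → Finset Γ := fun x n => (hc0 x _ (hpos n)).toFinset
  have hK : ∀ x n γ, γ ∈ K x n ↔ 1 / ((n:ℝ) + 1) ≤ |Φ x γ| := fun x n γ => by simp [K]
  refine ⟨fun x => Submodule.span ℝ (⋃ n : ℕ, (Z (K x n) : Set E)), fun x => ?_, ?_⟩
  · exact (TopologicalSpace.IsSeparable.iUnion fun n => hZsep _).span
  · intro x xs hxs
    have hx := hb x (K x) (fun n m hnm γ hγ => by
      rw [hK] at hγ ⊢
      exact (one_div_le_one_div_of_le (by positivity) (by gcongr)).trans hγ) (fun γ hγ => by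
      obtain ⟨n, hn⟩ := exists_nat_one_div_lt (abs_pos.mpr hγ)
      exact mem_iUnion.mpr ⟨n, (hK x n γ).mpr hn.le⟩)
    refine closure_mono ?_ hx
    refine Submodule.span_le.mpr (iUnion_subset fun n => ?_)
    obtain ⟨m, hm⟩ := (hxs.eventually (gt_mem_nhds (hpos (2 * n + 1)))).exists
    have hbd : BddAbove (range fun γ => |Φ (xs m) γ - Φ x γ|) := by
      obtain ⟨C, hC⟩ := c0_bdd (Φ x) (hc0 x 1 one_pos)
      obtain ⟨D, hD⟩ := c0_bdd (Φ (xs m)) (hc0 (xs m) 1 one_pos)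
      refine ⟨D + C, ?_⟩
      rintro _ ⟨γ, rfl⟩
      exact (abs_sub _ _).trans (add_le_add (hD γ) (hC γ))
    have hsub : K x n ⊆ K (xs m) (2 * n + 1) := by
      intro γ hγ
      rw [hK] at hγ ⊢
      have h1 := (le_ciSup hbd γ).trans_lt hm
      have h2 := abs_sub_abs_le_abs_sub (Φ x γ) (Φ (xs m) γ)
      rw [abs_sub_comm] at h2
      have h3 : 1 / (((2 * n + 1 : ℕ) : ℝ) + 1) = 1 / ((n:ℝ) + 1) / 2 := by
        push_cast
        field_simp
        ring
      rw [h3] at h1 ⊢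
      linarith
    intro z hz
    exact Submodule.subset_span (mem_iUnion.mpr ⟨m, Submodule.subset_span
      (mem_iUnion.mpr ⟨2 * n + 1, ha _ _ hsub hz⟩)⟩)
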